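/- Let 1 ≤ p ≤ 2. On the real or complex sequence space ℓ_p, every continuous symmetric bilinear form B satisfies ‖B‖ ≤ 2^{(2−p)/p}·‖B̂‖, and the symmetric bilinear form L(x,y) = (x₁y₂ + x₂y₁)/2, with associated 2-homogeneous polynomial L̂(x) = x₁x₂, satisfies ‖L‖ = 2^{(2−p)/p}·‖L̂‖ (indeed ‖L‖ = 1/2 and ‖L̂‖ = 2^{−2/p}); hence the 2nd polarization constant of ℓ_p equals 2^{(2−p)/p}. -/

import Mathlib

open Metric
open scoped ENNReal

/-!
Polarization gives `4 B(x, y) = B̂(x + y) - B̂(x - y)`, so that `‖B‖ ≤ C ‖B̂‖` as soon as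
`‖x + y‖² + ‖x - y‖² ≤ 4 C` on the unit ball. In `ℓ_p` with `p ≤ 2`, apply the triangle inequality
of the `r`-norm on `ℝ²`, `r = 2 / p`, to the series of the vectors
`(|xₖ + yₖ|^p, |xₖ - yₖ|^p)`: by the parallelogram law the `r`-norm of the `k`-th term is
`(2 (|xₖ|² + |yₖ|²))^(p / 2) ≤ 2^(p / 2) (|xₖ|^p + |yₖ|^p)`, and summation gives
`C = 2^((2 - p) / p)`. For the form `L`, Cauchy-Schwarz gives `‖L‖` and AM-GM gives `‖L̂‖`.
-/

section MultilinearMaps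

variable {𝕜 ι : Type*} [RCLike 𝕜]

lemma exists_norm_le_one_norm_smul_eq (𝕜 : Type*) [RCLike 𝕜] {E : Type*} [NormedAddCommGroup E]
    [NormedSpace 𝕜 E] (x : E) : ∃ u : E, ‖u‖ ≤ 1 ∧ (‖x‖ : 𝕜) • u = x := by
  rcases eq_or_ne x 0 with rfl | hx
  · exact ⟨0, by simp⟩
  · refine ⟨(‖x‖ : 𝕜)⁻¹ • x, (norm_smul_inv_norm hx).le, smul_inv_smul₀ ?_ x⟩
    exact RCLike.ofReal_ne_zero.2 (norm_ne_zero_iff.2 hx)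

lemma opNorm_le_of_forall_norm_le_one [Fintype ι] {E : ι → Type*} {F : Type*}
    [∀ i, NormedAddCommGroup (E i)] [∀ i, NormedSpace 𝕜 (E i)]
    [SeminormedAddCommGroup F] [NormedSpace 𝕜 F] {B : ContinuousMultilinearMap 𝕜 E F} {C : ℝ}
    (h : ∀ u, (∀ i, ‖u i‖ ≤ 1) → ‖B u‖ ≤ C) : ‖B‖ ≤ C := by
  refine B.opNorm_le_bound ((norm_nonneg _).trans (h 0 (by simp))) fun x => ?_
  choose u hu hux using fun i => exists_norm_le_one_norm_smul_eq 𝕜 (x i)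
  calc ‖B x‖ = ‖B fun i => (‖x i‖ : 𝕜) • u i‖ := by simp only [hux]
    _ = (∏ i, ‖x i‖) * ‖B u‖ := by simp [B.map_smul_univ, norm_smul, norm_prod]
    _ ≤ C * ∏ i, ‖x i‖ := by rw [mul_comm]; gcongr; exact h u hu

variable {E F : Type*} [NormedAddCommGroup E] [NormedSpace 𝕜 E]
  [SeminormedAddCommGroup F] [NormedSpace 𝕜 F]

/-- A multilinear map is symmetric if it is invariant under permutations of its arguments. -/
def IsSymmetricMultilinear (B : ContinuousMultilinearMap 𝕜 (fun _ : ι => E) F) : Prop :=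
  ∀ (σ : Equiv.Perm ι) (v : ι → E), B (v ∘ σ) = B v

/-- The norm of the homogeneous polynomial `u ↦ B (u, …, u)` associated with a multilinear map `B`:
the supremum of its norm over the closed unit ball. The supremum is real-valued, hence meaningful
only when it is finite, as is the case for finitely many arguments. -/
noncomputable def diagonalNorm (B : ContinuousMultilinearMap 𝕜 (fun _ : ι => E) F) : ℝ :=
  sSup ((fun u => ‖B (fun _ => u)‖) '' closedBall (0 : E) 1)

lemma diagonalNorm_nonneg (B : ContinuousMultilinearMap 𝕜 (fun _ : ι => E) F) :
    0 ≤ diagonalNorm B :=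
  Real.sSup_nonneg (by rintro _ ⟨u, -, rfl⟩; exact norm_nonneg _)

lemma norm_apply_le_diagonalNorm [Finite ι] (B : ContinuousMultilinearMap 𝕜 (fun _ : ι => E) F)
    {u : E} (hu : ‖u‖ ≤ 1) : ‖B fun _ => u‖ ≤ diagonalNorm B := by
  cases nonempty_fintype ι
  refine le_csSup ⟨‖B‖, ?_⟩ ⟨u, mem_closedBall_zero_iff.2 hu, rfl⟩
  rintro _ ⟨v, hv, rfl⟩
  simpa using B.le_opNorm_mul_prod_of_le fun _ => mem_closedBall_zero_iff.1 hv

lemma norm_apply_le_diagonalNorm_mul_pow [Fintype ι]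
    (B : ContinuousMultilinearMap 𝕜 (fun _ : ι => E) F) (x : E) :
    ‖B fun _ => x‖ ≤ diagonalNorm B * ‖x‖ ^ Fintype.card ι := by
  obtain ⟨u, hu, hux⟩ := exists_norm_le_one_norm_smul_eq 𝕜 x
  calc ‖B fun _ => x‖ = ‖B fun _ => (‖x‖ : 𝕜) • u‖ := by rw [hux]
    _ = ‖x‖ ^ Fintype.card ι * ‖B fun _ => u‖ := by simp [B.map_smul_univ, norm_smul]
    _ ≤ diagonalNorm B * ‖x‖ ^ Fintype.card ι := by
      rw [mul_comm]; gcongr; exact norm_apply_le_diagonalNorm B hu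

namespace IsSymmetricMultilinear

variable {B : ContinuousMultilinearMap 𝕜 (fun _ : Fin 2 => E) F}

lemma apply_swap (hB : IsSymmetricMultilinear B) (x y : E) : B ![y, x] = B ![x, y] := by
  rw [← hB (Equiv.swap 0 1) ![x, y]]
  congr 1
  ext i
  fin_cases i <;> simp

lemma apply_diagonal_add (hB : IsSymmetricMultilinear B) (x y : E) :
    (B fun _ => x + y) = (B fun _ => x) + 2 • B ![x, y] + B fun _ => y := by
  have diag (u : E) : (fun _ : Fin 2 => u) = ![u, u] := by ext i; fin_cases i <;> rfl
  have add_left (u v w : E) : B ![u + v, w] = B ![u, w] + B ![v, w] := B.cons_add ![w] u v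
  have add_right (u v w : E) : B ![u, v + w] = B ![u, v] + B ![u, w] := by
    rw [hB.apply_swap, add_left, hB.apply_swap, hB.apply_swap u]
  rw [diag, diag, diag, add_left, add_right, add_right, hB.apply_swap x y]
  abel

lemma four_smul_apply (hB : IsSymmetricMultilinear B) (x y : E) :
    (4 : 𝕜) • B ![x, y] = (B fun _ => x + y) - B fun _ => x - y := by
  have neg_diag : (B fun _ => -y) = B fun _ => y := by
    simpa using B.map_smul_univ (fun _ => -1) fun _ => y
  have neg_right : B ![x, -y] = -B ![x, y] := by
    rw [hB.apply_swap, hB.apply_swap y, ← neg_one_smul 𝕜 y, ← neg_one_smul 𝕜 (B _)]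
    exact B.cons_smul ![x] (-1) y
  rw [sub_eq_add_neg x y, hB.apply_diagonal_add, hB.apply_diagonal_add, neg_diag, neg_right]
  module

theorem opNorm_le_mul_diagonalNorm (hB : IsSymmetricMultilinear B) {C : ℝ}
    (hC : ∀ x y : E, ‖x‖ ≤ 1 → ‖y‖ ≤ 1 → ‖x + y‖ ^ 2 + ‖x - y‖ ^ 2 ≤ 4 * C) :
    ‖B‖ ≤ C * diagonalNorm B := by
  refine opNorm_le_of_forall_norm_le_one fun u hu => ?_
  obtain ⟨x, y, rfl⟩ : ∃ x y, u = ![x, y] := ⟨u 0, u 1, by ext i; fin_cases i <;> rfl⟩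
  have hxy := hC x y (hu 0) (hu 1)
  have h4 : 4 * ‖B ![x, y]‖ ≤ 4 * (C * diagonalNorm B) := calc
    4 * ‖B ![x, y]‖ = ‖(B fun _ => x + y) - B fun _ => x - y‖ := by
      rw [← hB.four_smul_apply, norm_smul, RCLike.norm_ofNat]
    _ ≤ ‖B fun _ => x + y‖ + ‖B fun _ => x - y‖ := norm_sub_le _ _
    _ ≤ diagonalNorm B * ‖x + y‖ ^ 2 + diagonalNorm B * ‖x - y‖ ^ 2 :=
      add_le_add (norm_apply_le_diagonalNorm_mul_pow B _) (norm_apply_le_diagonalNorm_mul_pow B _)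
    _ = diagonalNorm B * (‖x + y‖ ^ 2 + ‖x - y‖ ^ 2) := by ring
    _ ≤ diagonalNorm B * (4 * C) := mul_le_mul_of_nonneg_left hxy (diagonalNorm_nonneg B)
    _ = 4 * (C * diagonalNorm B) := by ring
  exact le_of_mul_le_mul_left h4 four_pos

end IsSymmetricMultilinear

/-- The `n`-th polarization constant of `E`: the least `M` such that `‖B‖ ≤ M ‖B̂‖` for all
continuous symmetric `n`-linear forms `B` on `E`, encoded as an infimum in `ℝ`. -/
noncomputable def polarizationConstant (𝕜 E : Type*) [RCLike 𝕜] [NormedAddCommGroup E]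
    [NormedSpace 𝕜 E] (n : ℕ) : ℝ :=
  sInf {M : ℝ | ∀ B : ContinuousMultilinearMap 𝕜 (fun _ : Fin n => E) 𝕜,
    IsSymmetricMultilinear B → ‖B‖ ≤ M * diagonalNorm B}

lemma polarizationConstant_eq_of_extremal {n : ℕ} {C : ℝ}
    (hC : ∀ B : ContinuousMultilinearMap 𝕜 (fun _ : Fin n => E) 𝕜,
      IsSymmetricMultilinear B → ‖B‖ ≤ C * diagonalNorm B)
    {L : ContinuousMultilinearMap 𝕜 (fun _ : Fin n => E) 𝕜} (hL : IsSymmetricMultilinear L)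
    (hL0 : 0 < diagonalNorm L) (hLC : ‖L‖ = C * diagonalNorm L) :
    polarizationConstant 𝕜 E n = C :=
  IsLeast.csInf_eq ⟨hC, fun _ hM => le_of_mul_le_mul_right (hLC ▸ hM L hL) hL0⟩

end MultilinearMaps

section PowerInequalities

lemma rpow_rpow_two_div {q t : ℝ} (hq : q ≠ 0) (ht : 0 ≤ t) : (t ^ q) ^ (2 / q) = t ^ 2 := by
  rw [← Real.rpow_mul ht, mul_div_cancel₀ _ hq, Real.rpow_two]

lemma sq_rpow_div_two {t : ℝ} (ht : 0 ≤ t) (q : ℝ) : (t ^ 2) ^ (q / 2) = t ^ q := by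
  rw [← Real.rpow_two, ← Real.rpow_mul ht, mul_div_cancel₀ _ two_ne_zero]

lemma rpow_sum_rpow_le_of_hasSum {κ ι : Type*} [Fintype κ] {r : ℝ} (hr : 1 ≤ r) {a : κ → ι → ℝ}
    {A : κ → ℝ} {g : ι → ℝ} {G : ℝ} (ha : ∀ k, HasSum (a k) (A k)) (hg : HasSum g G)
    (ha0 : ∀ k i, 0 ≤ a k i) (h : ∀ i, (∑ k, a k i ^ r) ^ (1 / r) ≤ g i) :
    (∑ k, A k ^ r) ^ (1 / r) ≤ G := by
  have hr0 : (ENNReal.ofReal r).toReal = r := ENNReal.toReal_ofReal (zero_le_one.trans hr)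
  have : Fact (1 ≤ ENNReal.ofReal r) := ⟨ENNReal.one_le_ofReal.2 hr⟩
  have norm_toLp {u : κ → ℝ} (hu : ∀ k, 0 ≤ u k) :
      ‖WithLp.toLp (ENNReal.ofReal r) u‖ = (∑ k, u k ^ r) ^ (1 / r) := by
    rw [PiLp.norm_eq_sum (by linarith), hr0]
    simp only [Real.norm_of_nonneg (hu _)]
  have hsum : HasSum (fun i => WithLp.toLp (ENNReal.ofReal r) fun k => a k i)
      (WithLp.toLp (ENNReal.ofReal r) A) :=
    (PiLp.continuousLinearEquiv (ENNReal.ofReal r) ℝ fun _ : κ => ℝ).symm.hasSum'.2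
      (Pi.hasSum.2 ha)
  rw [← norm_toLp fun k => (ha k).nonneg (ha0 k)]
  exact hsum.norm_le_of_bounded hg fun i => (norm_toLp fun k => ha0 k i).trans_le (h i)

lemma norm_add_sq_add_norm_sub_sq_rpow_le (𝕜 : Type*) {H : Type*} [RCLike 𝕜]
    [SeminormedAddCommGroup H] [InnerProductSpace 𝕜 H] {q : ℝ} (hq0 : 0 ≤ q) (hq2 : q ≤ 2)
    (s t : H) :
    (‖s + t‖ ^ 2 + ‖s - t‖ ^ 2) ^ (q / 2) ≤ 2 ^ (q / 2) * (‖s‖ ^ q + ‖t‖ ^ q) := by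
  have parallelogram : ‖s + t‖ ^ 2 + ‖s - t‖ ^ 2 = 2 * (‖s‖ ^ 2 + ‖t‖ ^ 2) := by
    simpa only [sq] using parallelogram_law_with_norm 𝕜 s t
  rw [parallelogram, Real.mul_rpow zero_le_two (by positivity),
    ← sq_rpow_div_two (norm_nonneg s), ← sq_rpow_div_two (norm_nonneg t)]
  gcongr
  exact Real.rpow_add_le_add_rpow (sq_nonneg _) (sq_nonneg _) (by linarith) (by linarith)

lemma mul_le_two_rpow_mul_sq {q a b N : ℝ} (hq : 0 < q) (ha : 0 ≤ a) (hb : 0 ≤ b) (hN : 0 ≤ N)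
    (h : a ^ q + b ^ q ≤ N ^ q) : a * b ≤ 2 ^ (-2 / q) * N ^ 2 := by
  rw [← Real.rpow_le_rpow_iff (mul_nonneg ha hb) (by positivity) hq]
  calc (a * b) ^ q = a ^ q * b ^ q := Real.mul_rpow ha hb
    _ ≤ (a ^ q + b ^ q) ^ 2 / 4 := by linarith [four_mul_le_sq_add (a ^ q) (b ^ q)]
    _ ≤ (N ^ q) ^ 2 / 4 := by gcongr
    _ = (2 ^ (-2 / q) * N ^ 2) ^ q := by
      rw [Real.mul_rpow (by positivity) (by positivity), ← Real.rpow_mul zero_le_two,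
        div_mul_cancel₀ _ hq.ne', ← Real.rpow_pow_comm hN,
        show (2 : ℝ) ^ (-2 : ℝ) = 1 / 4 by norm_num [Real.rpow_neg]]
      ring

end PowerInequalities

section LpSpaces

variable {ι : Type*} {E : ι → Type*} {p : ℝ≥0∞}

theorem lp_norm_add_sq_add_norm_sub_sq_le (𝕜 : Type*) [RCLike 𝕜] [∀ i, NormedAddCommGroup (E i)]
    [∀ i, InnerProductSpace 𝕜 (E i)] (hp : 0 < p.toReal) (hp2 : p.toReal ≤ 2) (x y : lp E p) :
    ‖x + y‖ ^ 2 + ‖x - y‖ ^ 2 ≤ 2 * (‖x‖ ^ p.toReal + ‖y‖ ^ p.toReal) ^ (2 / p.toReal) := by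
  set q := p.toReal
  have hnorm (z : lp E p) : 0 ≤ ‖z‖ := lp.norm_nonneg' z
  have hsum (z : lp E p) : HasSum (fun i => ‖z i‖ ^ q) (‖z‖ ^ q) := lp.hasSum_norm hp z
  have minkowski : (‖x + y‖ ^ 2 + ‖x - y‖ ^ 2) ^ (q / 2) ≤
      2 ^ (q / 2) * (‖x‖ ^ q + ‖y‖ ^ q) := by
    have h := rpow_sum_rpow_le_of_hasSum (r := 2 / q)
      (a := ![fun i => ‖(x + y) i‖ ^ q, fun i => ‖(x - y) i‖ ^ q])
      (A := ![‖x + y‖ ^ q, ‖x - y‖ ^ q]) ((one_le_div hp).2 hp2)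
      (Fin.forall_fin_two.2 ⟨hsum (x + y), hsum (x - y)⟩)
      (((hsum x).add (hsum y)).mul_left (2 ^ (q / 2)))
      (Fin.forall_fin_two.2 ⟨fun _ => Real.rpow_nonneg (norm_nonneg _) q,
        fun _ => Real.rpow_nonneg (norm_nonneg _) q⟩)
      (fun i => by
        simpa [rpow_rpow_two_div hp.ne'] using
          norm_add_sq_add_norm_sub_sq_rpow_le 𝕜 hp.le hp2 (x i) (y i))
    simpa [rpow_rpow_two_div hp.ne', hnorm] using h
  have hxy : 0 ≤ ‖x‖ ^ q + ‖y‖ ^ q :=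
    add_nonneg (Real.rpow_nonneg (hnorm x) q) (Real.rpow_nonneg (hnorm y) q)
  rw [← Real.rpow_le_rpow_iff (by positivity) (by positivity) (half_pos hp)]
  refine minkowski.trans_eq ?_
  rw [Real.mul_rpow zero_le_two (by positivity), ← Real.rpow_mul hxy,
    div_mul_div_cancel₀ hp.ne', div_self two_ne_zero, Real.rpow_one]

lemma lp_norm_add_sq_add_norm_sub_sq_le_of_norm_le_one (𝕜 : Type*) [RCLike 𝕜]
    [∀ i, NormedAddCommGroup (E i)] [∀ i, InnerProductSpace 𝕜 (E i)] (hp : 0 < p.toReal)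
    (hp2 : p.toReal ≤ 2) {x y : lp E p} (hx : ‖x‖ ≤ 1) (hy : ‖y‖ ≤ 1) :
    ‖x + y‖ ^ 2 + ‖x - y‖ ^ 2 ≤ 4 * 2 ^ ((2 - p.toReal) / p.toReal) := by
  have rpow_le_one {z : lp E p} (hz : ‖z‖ ≤ 1) : ‖z‖ ^ p.toReal ≤ 1 :=
    Real.rpow_le_one (lp.norm_nonneg' z) hz hp.le
  have rpow_nonneg (z : lp E p) : 0 ≤ ‖z‖ ^ p.toReal := Real.rpow_nonneg (lp.norm_nonneg' z) _
  calc ‖x + y‖ ^ 2 + ‖x - y‖ ^ 2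
      ≤ 2 * (‖x‖ ^ p.toReal + ‖y‖ ^ p.toReal) ^ (2 / p.toReal) :=
        lp_norm_add_sq_add_norm_sub_sq_le 𝕜 hp hp2 x y
    _ ≤ 2 * 2 ^ (2 / p.toReal) := by
        gcongr
        · exact add_nonneg (rpow_nonneg x) (rpow_nonneg y)
        · linarith [rpow_le_one hx, rpow_le_one hy]
    _ = 4 * 2 ^ ((2 - p.toReal) / p.toReal) := by
        rw [sub_div, div_self hp.ne', Real.rpow_sub_one two_ne_zero]
        ring

variable [∀ i, NormedAddCommGroup (E i)]

lemma lp_sum_rpow_le_norm_rpow_of_le (hp : 0 < p.toReal) {q : ℝ} (hpq : p.toReal ≤ q)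
    (x : lp E p) (s : Finset ι) : ∑ i ∈ s, ‖x i‖ ^ q ≤ ‖x‖ ^ q := by
  have split_rpow {t : ℝ} (ht : 0 ≤ t) : t ^ q = t ^ p.toReal * t ^ (q - p.toReal) := by
    rw [← Real.rpow_add_of_nonneg ht hp.le (sub_nonneg.2 hpq), add_sub_cancel]
  have hx : 0 ≤ ‖x‖ := lp.norm_nonneg' x
  calc ∑ i ∈ s, ‖x i‖ ^ q = ∑ i ∈ s, ‖x i‖ ^ p.toReal * ‖x i‖ ^ (q - p.toReal) := by
        simp only [split_rpow (norm_nonneg _)]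
    _ ≤ ∑ i ∈ s, ‖x i‖ ^ p.toReal * ‖x‖ ^ (q - p.toReal) := by
        gcongr with i
        exact lp.norm_apply_le_norm (ENNReal.toReal_pos_iff.1 hp).1.ne' x i
    _ = (∑ i ∈ s, ‖x i‖ ^ p.toReal) * ‖x‖ ^ (q - p.toReal) := (Finset.sum_mul ..).symm
    _ ≤ ‖x‖ ^ p.toReal * ‖x‖ ^ (q - p.toReal) :=
        mul_le_mul_of_nonneg_right (lp.sum_rpow_le_norm_rpow hp x s) (Real.rpow_nonneg hx _)
    _ = ‖x‖ ^ q := (split_rpow hx).symm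

lemma lp_norm_sq_add_norm_sq_le (hp : 0 < p.toReal) (hp2 : p.toReal ≤ 2) {i j : ι} (hij : i ≠ j)
    (x : lp E p) : ‖x i‖ ^ 2 + ‖x j‖ ^ 2 ≤ ‖x‖ ^ 2 := by
  classical
  simpa [Finset.sum_pair hij] using lp_sum_rpow_le_norm_rpow_of_le hp hp2 x {i, j}

lemma lp_norm_mul_norm_le (hp : 0 < p.toReal) {i j : ι} (hij : i ≠ j) (x : lp E p) :
    ‖x i‖ * ‖x j‖ ≤ 2 ^ (-2 / p.toReal) * ‖x‖ ^ 2 := by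
  classical
  have h := lp.sum_rpow_le_norm_rpow hp x {i, j}
  rw [Finset.sum_pair hij] at h
  exact mul_le_two_rpow_mul_sq hp (norm_nonneg _) (norm_nonneg _) (lp.norm_nonneg' x) h

lemma lp_exists_norm_eq_one_apply_eq {𝕜 : Type*} [RCLike 𝕜] (hp : 0 < p.toReal) {i j : ι}
    (hij : i ≠ j) : ∃ w : lp (fun _ : ι => 𝕜) p, ‖w‖ = 1 ∧
      w i = ((2 ^ (-1 / p.toReal) : ℝ) : 𝕜) ∧ w j = ((2 ^ (-1 / p.toReal) : ℝ) : 𝕜) := by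
  classical
  set c : ℝ := 2 ^ (-1 / p.toReal) with hc
  have hc0 : 0 ≤ c := by positivity
  have hcp : c ^ p.toReal = 2⁻¹ := by
    rw [hc, ← Real.rpow_mul zero_le_two, div_mul_cancel₀ _ hp.ne', Real.rpow_neg_one]
  let w : lp (fun _ : ι => 𝕜) p := ∑ k ∈ {i, j}, lp.single p k (c : 𝕜)
  have hw : ‖w‖ ^ p.toReal = 1 := by
    refine (lp.norm_sum_single (E := fun _ : ι => 𝕜) hp (fun _ => (c : 𝕜)) {i, j}).trans ?_
    rw [Finset.sum_pair hij, RCLike.norm_of_nonneg hc0, hcp]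
    norm_num
  refine ⟨w, ?_, ?_, ?_⟩
  · rwa [← Real.rpow_left_inj (lp.norm_nonneg' w) zero_le_one hp.ne', Real.one_rpow]
  · simp [w, Finset.sum_pair hij, lp.single_apply, hij]
  · simp [w, Finset.sum_pair hij, lp.single_apply, hij.symm]

end LpSpaces

section CoordinateProductForm

variable {𝕜 ι : Type*} [RCLike 𝕜] {p : ℝ≥0∞} [Fact (1 ≤ p)] {i j : ι}

/-- The symmetric bilinear form `(x, y) ↦ (xᵢ yⱼ + xⱼ yᵢ) / 2` on `ℓ_p`, whose associated quadratic
polynomial is `x ↦ xᵢ xⱼ`. -/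
noncomputable def coordinateProductForm (𝕜 : Type*) {ι : Type*} [RCLike 𝕜] (p : ℝ≥0∞)
    [Fact (1 ≤ p)] (i j : ι) :
    ContinuousMultilinearMap 𝕜 (fun _ : Fin 2 => lp (fun _ : ι => 𝕜) p) 𝕜 :=
  let coord (k : ι) : lp (fun _ : ι => 𝕜) p →L[𝕜] 𝕜 := lp.evalCLM 𝕜 (fun _ : ι => 𝕜) p k
  let mul := ContinuousMultilinearMap.mkPiAlgebra 𝕜 (Fin 2) 𝕜
  (2⁻¹ : 𝕜) • (mul.compContinuousLinearMap ![coord i, coord j] +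
    mul.compContinuousLinearMap ![coord j, coord i])

lemma coordinateProductForm_apply (v : Fin 2 → lp (fun _ : ι => 𝕜) p) :
    coordinateProductForm 𝕜 p i j v = (v 0 i * v 1 j + v 0 j * v 1 i) / 2 := by
  rw [div_eq_inv_mul]
  simp [coordinateProductForm, Fin.prod_univ_two, lp.evalCLM, mul_add]

lemma isSymmetricMultilinear_coordinateProductForm :
    IsSymmetricMultilinear (coordinateProductForm 𝕜 p i j) := by
  intro σ v
  simp only [coordinateProductForm_apply, Function.comp_apply]
  obtain ⟨h0, h1⟩ | ⟨h0, h1⟩ : (σ 0 = 0 ∧ σ 1 = 1) ∨ (σ 0 = 1 ∧ σ 1 = 0) := by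
    revert σ; decide
  · rw [h0, h1]
  · rw [h0, h1]; ring

lemma norm_coordinateProductForm_apply_diagonal (u : lp (fun _ : ι => 𝕜) p) :
    ‖coordinateProductForm 𝕜 p i j fun _ => u‖ = ‖u i‖ * ‖u j‖ := by
  rw [coordinateProductForm_apply, ← norm_mul, mul_comm (u j), add_self_div_two]

lemma norm_coordinateProductForm_le (hp : 0 < p.toReal) (hp2 : p.toReal ≤ 2) (hij : i ≠ j) :
    ‖coordinateProductForm 𝕜 p i j‖ ≤ 1 / 2 := by
  refine ContinuousMultilinearMap.opNorm_le_bound (by norm_num) fun v => ?_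
  have cauchy_schwarz : ‖v 0 i‖ * ‖v 1 j‖ + ‖v 0 j‖ * ‖v 1 i‖ ≤ ‖v 0‖ * ‖v 1‖ := by
    refine le_of_sq_le_sq ?_ (by positivity)
    calc (‖v 0 i‖ * ‖v 1 j‖ + ‖v 0 j‖ * ‖v 1 i‖) ^ 2
        ≤ (‖v 0 i‖ ^ 2 + ‖v 0 j‖ ^ 2) * (‖v 1 i‖ ^ 2 + ‖v 1 j‖ ^ 2) := by
          linarith [sq_nonneg (‖v 0 i‖ * ‖v 1 i‖ - ‖v 0 j‖ * ‖v 1 j‖)]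
      _ ≤ ‖v 0‖ ^ 2 * ‖v 1‖ ^ 2 := by
          gcongr <;> exact lp_norm_sq_add_norm_sq_le hp hp2 hij _
      _ = (‖v 0‖ * ‖v 1‖) ^ 2 := (mul_pow ..).symm
  calc ‖coordinateProductForm 𝕜 p i j v‖ = ‖v 0 i * v 1 j + v 0 j * v 1 i‖ / 2 := by
        rw [coordinateProductForm_apply, norm_div, RCLike.norm_ofNat]
    _ ≤ (‖v 0 i‖ * ‖v 1 j‖ + ‖v 0 j‖ * ‖v 1 i‖) / 2 := by
        gcongr
        exact (norm_add_le _ _).trans_eq (by rw [norm_mul, norm_mul])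
    _ ≤ ‖v 0‖ * ‖v 1‖ / 2 := by gcongr
    _ = 1 / 2 * ∏ k, ‖v k‖ := by rw [Fin.prod_univ_two]; ring

lemma half_le_norm_coordinateProductForm (hij : i ≠ j) :
    1 / 2 ≤ ‖coordinateProductForm 𝕜 p i j‖ := by
  classical
  have hp : 0 < p := zero_lt_one.trans_le Fact.out
  simpa [coordinateProductForm_apply, Fin.prod_univ_two, lp.norm_single hp, lp.single_apply, hij,
    hij.symm] using (coordinateProductForm 𝕜 p i j).le_opNorm ![lp.single p i 1, lp.single p j 1]

lemma norm_coordinateProductForm (hp : 0 < p.toReal) (hp2 : p.toReal ≤ 2) (hij : i ≠ j) :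
    ‖coordinateProductForm 𝕜 p i j‖ = 1 / 2 :=
  (norm_coordinateProductForm_le hp hp2 hij).antisymm (half_le_norm_coordinateProductForm hij)

lemma diagonalNorm_coordinateProductForm (hp : 0 < p.toReal) (hij : i ≠ j) :
    diagonalNorm (coordinateProductForm 𝕜 p i j) = 2 ^ (-2 / p.toReal) := by
  refine IsGreatest.csSup_eq ⟨?_, ?_⟩
  · obtain ⟨w, hw, hwi, hwj⟩ := lp_exists_norm_eq_one_apply_eq (𝕜 := 𝕜) hp hij
    refine ⟨w, mem_closedBall_zero_iff.2 hw.le, ?_⟩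
    simp only [norm_coordinateProductForm_apply_diagonal]
    rw [hwi, hwj, RCLike.norm_of_nonneg (by positivity), ← Real.rpow_add two_pos, ← add_div]
    norm_num
  · rintro _ ⟨u, hu, rfl⟩
    simp only [norm_coordinateProductForm_apply_diagonal]
    refine (lp_norm_mul_norm_le hp hij u).trans (mul_le_of_le_one_right (by positivity) ?_)
    exact pow_le_one₀ (norm_nonneg u) (mem_closedBall_zero_iff.1 hu)

lemma norm_coordinateProductForm_eq_mul_diagonalNorm (hp : 0 < p.toReal) (hp2 : p.toReal ≤ 2)
    (hij : i ≠ j) : ‖coordinateProductForm 𝕜 p i j‖ =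
      2 ^ ((2 - p.toReal) / p.toReal) * diagonalNorm (coordinateProductForm 𝕜 p i j) := by
  have exponents : (2 - p.toReal) / p.toReal + -2 / p.toReal = -1 := by field_simp; ring
  rw [norm_coordinateProductForm hp hp2 hij, diagonalNorm_coordinateProductForm hp hij,
    ← Real.rpow_add two_pos, exponents, Real.rpow_neg_one, one_div]

end CoordinateProductForm

theorem polarization_constant_lp_two_general {𝕜 ι : Type*} [RCLike 𝕜] {p : ℝ≥0∞} [Fact (1 ≤ p)]
    (hp : p ≤ 2) {i j : ι} (hij : i ≠ j) :
    (∀ B : ContinuousMultilinearMap 𝕜 (fun _ : Fin 2 => lp (fun _ : ι => 𝕜) p) 𝕜,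
      IsSymmetricMultilinear B → ‖B‖ ≤ 2 ^ ((2 - p.toReal) / p.toReal) * diagonalNorm B) ∧
    (∃ L : ContinuousMultilinearMap 𝕜 (fun _ : Fin 2 => lp (fun _ : ι => 𝕜) p) 𝕜,
      IsSymmetricMultilinear L ∧
      (∀ v, L v = (v 0 i * v 1 j + v 0 j * v 1 i) / 2) ∧
      ‖L‖ = 1 / 2 ∧
      diagonalNorm L = 2 ^ (-2 / p.toReal) ∧
      ‖L‖ = 2 ^ ((2 - p.toReal) / p.toReal) * diagonalNorm L) ∧
    polarizationConstant 𝕜 (lp (fun _ : ι => 𝕜) p) 2 = 2 ^ ((2 - p.toReal) / p.toReal) := by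
  have hq : 0 < p.toReal := ENNReal.toReal_pos (zero_lt_one.trans_le Fact.out).ne'
    (hp.trans_lt ENNReal.ofNat_lt_top).ne
  have hq2 : p.toReal ≤ 2 := ENNReal.toReal_mono ENNReal.ofNat_ne_top hp
  have upper (B : ContinuousMultilinearMap 𝕜 (fun _ : Fin 2 => lp (fun _ : ι => 𝕜) p) 𝕜)
      (hB : IsSymmetricMultilinear B) :
      ‖B‖ ≤ 2 ^ ((2 - p.toReal) / p.toReal) * diagonalNorm B :=
    hB.opNorm_le_mul_diagonalNorm fun _ _ hx hy =>
      lp_norm_add_sq_add_norm_sub_sq_le_of_norm_le_one 𝕜 hq hq2 hx hy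
  have hdiag := diagonalNorm_coordinateProductForm (𝕜 := 𝕜) hq hij
  have hext := norm_coordinateProductForm_eq_mul_diagonalNorm (𝕜 := 𝕜) hq hq2 hij
  have hsymm := isSymmetricMultilinear_coordinateProductForm (𝕜 := 𝕜) (p := p) (i := i) (j := j)
  exact ⟨upper, ⟨coordinateProductForm 𝕜 p i j, hsymm, coordinateProductForm_apply,
    norm_coordinateProductForm hq hq2 hij, hdiag, hext⟩,
    polarizationConstant_eq_of_extremal upper hsymm (hdiag ▸ by positivity) hext⟩

/-- The second polarization constant of `ℓ_p` (real or complex) for `1 ≤ p ≤ 2`: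
every continuous symmetric bilinear form `B` satisfies `‖B‖ ≤ 2^{(2-p)/p} ‖B̂‖`, and the
form `L(x,y) = (x₁y₂ + x₂y₁)/2`, with `L̂(x) = x₁x₂`, has `‖L‖ = 1/2`,
`‖L̂‖ = 2^{-2/p}`, and `‖L‖ = 2^{(2-p)/p} ‖L̂‖`; hence the second polarization constant
of `ℓ_p` equals `2^{(2-p)/p}`. -/
theorem polarization_constant_lp_two
    {𝕜 : Type*} [RCLike 𝕜] (p : ℝ) (hp1 : 1 ≤ p) (hp2 : p ≤ 2)
    [Fact (1 ≤ ENNReal.ofReal p)] :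
    (∀ B : ContinuousMultilinearMap 𝕜
        (fun _ : Fin 2 => lp (fun _ : ℕ => 𝕜) (ENNReal.ofReal p)) 𝕜,
      (∀ (σ : Equiv.Perm (Fin 2)) (v : Fin 2 → lp (fun _ : ℕ => 𝕜) (ENNReal.ofReal p)),
        B (v ∘ σ) = B v) →
      ‖B‖ ≤ (2 : ℝ) ^ ((2 - p) / p)
        * sSup ((fun u => ‖B (fun _ => u)‖) ''
            closedBall (0 : lp (fun _ : ℕ => 𝕜) (ENNReal.ofReal p)) 1)) ∧
    (∃ L : ContinuousMultilinearMap 𝕜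
        (fun _ : Fin 2 => lp (fun _ : ℕ => 𝕜) (ENNReal.ofReal p)) 𝕜,
      (∀ (σ : Equiv.Perm (Fin 2)) (v : Fin 2 → lp (fun _ : ℕ => 𝕜) (ENNReal.ofReal p)),
        L (v ∘ σ) = L v) ∧
      (∀ v, L v = (v 0 0 * v 1 1 + v 0 1 * v 1 0) / 2) ∧
      ‖L‖ = 1 / 2 ∧
      sSup ((fun u => ‖L (fun _ => u)‖) ''
          closedBall (0 : lp (fun _ : ℕ => 𝕜) (ENNReal.ofReal p)) 1)
        = (2 : ℝ) ^ (-(2 : ℝ) / p) ∧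
      ‖L‖ = (2 : ℝ) ^ ((2 - p) / p)
        * sSup ((fun u => ‖L (fun _ => u)‖) ''
            closedBall (0 : lp (fun _ : ℕ => 𝕜) (ENNReal.ofReal p)) 1)) ∧
    sInf {M : ℝ |
        ∀ B : ContinuousMultilinearMap 𝕜
          (fun _ : Fin 2 => lp (fun _ : ℕ => 𝕜) (ENNReal.ofReal p)) 𝕜,
        (∀ (σ : Equiv.Perm (Fin 2)) (v : Fin 2 → lp (fun _ : ℕ => 𝕜) (ENNReal.ofReal p)),
          B (v ∘ σ) = B v) →
        ‖B‖ ≤ M * sSup ((fun u => ‖B (fun _ => u)‖) ''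
            closedBall (0 : lp (fun _ : ℕ => 𝕜) (ENNReal.ofReal p)) 1)}
      = (2 : ℝ) ^ ((2 - p) / p) := by
  simpa only [ENNReal.toReal_ofReal (zero_le_one.trans hp1)] using!
    polarization_constant_lp_two_general (𝕜 := 𝕜) (ENNReal.ofReal_le_ofNat.2 hp2) zero_ne_one
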